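/- Let g : ℝ → ℝ be bounded and measurable, let [a, b] ⊆ [−1, 0] with a < b, and let f : ℝ → ℝ be measurable with 0 ≤ f(x) ≤ C for all x and some constant C < ∞, f(x) > 0 for almost every x ∈ [a, b], and f(x) = 0 for all x ∉ [a, b]. Let θ ∈ [0, π), and for each λ ∈ ℝ let (u(·,λ), v(·,λ)) be the solution of −u″ + (g + λ·f)·u = 0 with u(a,λ) = sin θ and v(a,λ) = cos θ, and let (R(·,λ), φ(·,λ)) be Prüfer variables for it with φ(a,λ) = θ. For λ > 0 set N_λ := { x ∈ [a, b] : φ(x,λ) ≥ π/4 }. Then (i) the Lebesgue measure |N_λ| tends to 0 as λ → ∞, and (ii) sup_{λ > 0} λ·∫_{N_λ} f(x) dx < ∞. -/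

import Mathlib

open MeasureTheory Filter

/-!
Let `[α, β]` be a compact subinterval of `(0, π)` and `h x ≥ 0` a bound for `cot² y - g x` over
`y ∈ [α, β]`. While the phase `φ` of a solution of `-u″ + (g + λ f) u = 0` stays in `[α, β]`, the
Riccati equation `(cot φ)′ = g + λ f - cot² φ` gives `λ ∫ f ≤ Δ(cot φ) + ∫ h`. Since `cot`
decreases, a climb of `φ` from `α` to `β` costs a fixed amount of `∫ h`, hence takes a fixed amount
of `∫ f`; as `λ ∫ f` is bounded there, no such climb happens for large `λ`.

So for large `λ` the phase never exceeds some `β < π` on `[a, b]`, and whenever `φ x` is above the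
threshold it was already above some `α > 0` on all of `[a, x]`. The inequality on `[a, x]` then
reads `λ ∫_a^x f ≤ B` with `B` independent of `x` and `λ`, which gives both claims.
-/

open Set

section Interval

variable {X Y : Type*} [ConditionallyCompleteLinearOrder X] [TopologicalSpace X]
  [OrderTopology X] [DenselyOrdered X] [LinearOrder Y] [TopologicalSpace Y] [OrderClosedTopology Y]

lemma exists_eq_forall_Icc_le {φ : X → Y} {p r : X} {c : Y}
    (hφ : ContinuousOn φ (Icc p r)) (hpr : p ≤ r) (hp : φ p ≤ c) (hr : c ≤ φ r) :
    ∃ s ∈ Icc p r, φ s = c ∧ ∀ x ∈ Icc s r, c ≤ φ x := by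
  have hcompact : IsCompact (Icc p r ∩ φ ⁻¹' {c}) :=
    isCompact_Icc.of_isClosed_subset (hφ.preimage_isClosed_of_isClosed isClosed_Icc
      isClosed_singleton) inter_subset_left
  obtain ⟨s, ⟨hs, hsc⟩, hgreatest⟩ :=
    hcompact.exists_isGreatest (intermediate_value_Icc hpr hφ ⟨hp, hr⟩)
  refine ⟨s, hs, hsc, fun x hx => ?_⟩
  by_contra! hxc
  obtain ⟨y, hy, hyc⟩ := intermediate_value_Icc hx.2
    (hφ.mono (Icc_subset_Icc_left (hs.1.trans hx.1))) ⟨hxc.le, hr⟩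
  have hys : y ≤ s := hgreatest ⟨⟨hs.1.trans (hx.1.trans hy.1), hy.2⟩, hyc⟩
  exact hxc.ne (le_antisymm hy.1 (hys.trans hx.1) ▸ hyc)

lemma exists_Icc_mapsTo_Icc {φ : X → Y} {p r : X} {α β : Y}
    (hφ : ContinuousOn φ (Icc p r)) (hpr : p ≤ r) (hαβ : α ≤ β) (hp : φ p ≤ α) (hr : β ≤ φ r) :
    ∃ s ∈ Icc p r, ∃ t ∈ Icc s r, φ s = α ∧ φ t = β ∧ MapsTo φ (Icc s t) (Icc α β) := by
  obtain ⟨s, hs, hsα, hα⟩ := exists_eq_forall_Icc_le hφ hpr hp (hαβ.trans hr)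
  have hdual : ContinuousOn (X := Xᵒᵈ) (Y := Yᵒᵈ) φ (Icc (α := Xᵒᵈ) r s) := by
    rw [show Icc (α := Xᵒᵈ) r s = Icc (α := X) s r from Icc_toDual]
    exact hφ.mono (Icc_subset_Icc_left hs.1)
  obtain ⟨t, ht, htβ, hβ⟩ := exists_eq_forall_Icc_le (X := Xᵒᵈ) (Y := Yᵒᵈ) hdual hs.2 hr
    (hsα.trans_le hαβ)
  exact ⟨s, hs, t, ht.symm, hsα, htβ, fun x hx => ⟨hα x ⟨hx.1, hx.2.trans ht.1⟩, hβ x hx.symm⟩⟩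

end Interval

section Cotangent

lemma strictAntiOn_cot : StrictAntiOn Real.cot (Ioo 0 Real.pi) := by
  intro x hx y hy hxy
  have hsin : 0 < Real.sin (y - x) :=
    Real.sin_pos_of_pos_of_lt_pi (sub_pos.2 hxy) (by linarith [hx.1, hy.2])
  rw [Real.sin_sub] at hsin
  rw [Real.cot_eq_cos_div_sin, Real.cot_eq_cos_div_sin,
    div_lt_div_iff₀ (Real.sin_pos_of_mem_Ioo hy) (Real.sin_pos_of_mem_Ioo hx)]
  linarith

lemma abs_cot_le_max {α β x : ℝ} (hα : 0 < α) (hβ : β < Real.pi) (hx : x ∈ Icc α β) :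
    |Real.cot x| ≤ max |Real.cot α| |Real.cot β| := by
  have hanti : AntitoneOn Real.cot (Icc α β) :=
    strictAntiOn_cot.antitoneOn.mono (Icc_subset_Ioo hα hβ)
  have hαβ : α ≤ β := hx.1.trans hx.2
  rw [max_comm]
  exact abs_le_max_abs_abs (hanti hx (right_mem_Icc.2 hαβ) hx.2)
    (hanti (left_mem_Icc.2 hαβ) hx hx.1)

end Cotangent

section Integral

variable {f h : ℝ → ℝ} {a b : ℝ}

lemma locallyIntegrable_of_norm_le {X E : Type*} [TopologicalSpace X] [MeasurableSpace X]
    {μ : Measure X} [IsLocallyFiniteMeasure μ] [NormedAddCommGroup E] {f : X → E} {C : ℝ}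
    (hf : AEStronglyMeasurable f μ) (hC : ∀ x, ‖f x‖ ≤ C) : LocallyIntegrable f μ :=
  (locallyIntegrable_const C).mono hf (ae_of_all _ fun x => (hC x).trans (le_abs_self C))

lemma intervalIntegrable_of_locallyIntegrable {E : Type*} [NormedAddCommGroup E] {μ : Measure ℝ}
    {f : ℝ → E} (hf : LocallyIntegrable f μ) (s t : ℝ) : IntervalIntegrable f μ s t :=
  (hf.integrableOn_isCompact isCompact_uIcc).intervalIntegrable

lemma continuous_integral_endpoints {E : Type*} [NormedAddCommGroup E] [NormedSpace ℝ E]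
    {μ : Measure ℝ} [NullSingletonClass μ] {f : ℝ → E} (hf : LocallyIntegrable f μ) :
    Continuous fun p : ℝ × ℝ => ∫ x in p.1..p.2, f x ∂μ := by
  have hint := intervalIntegrable_of_locallyIntegrable hf
  have hprim : Continuous fun y => ∫ x in (0 : ℝ)..y, f x ∂μ :=
    intervalIntegral.continuous_primitive hint 0
  exact ((hprim.comp continuous_snd).sub (hprim.comp continuous_fst)).congr fun p =>
    intervalIntegral.integral_interval_sub_left (hint 0 p.2) (hint 0 p.1)

lemma integral_pos_of_ae_pos {μ : Measure ℝ} (hμ : μ (Ioc a b) ≠ 0)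
    (hf : IntervalIntegrable f μ a b) (hpos : ∀ᵐ x ∂μ.restrict (Ioc a b), 0 < f x) :
    0 < ∫ x in a..b, f x ∂μ := by
  have hab : a < b := nonempty_Ioc.1 (nonempty_of_measure_ne_zero hμ)
  have hsupport : μ (Ioc a b) ≤ μ (f.support ∩ Ioc a b) := by
    refine measure_mono_ae ?_
    filter_upwards [(ae_restrict_iff' measurableSet_Ioc).1 hpos] with x hx hxab
    exact ⟨(hx hxab).ne', hxab⟩
  rw [intervalIntegral.integral_pos_iff_support_of_nonneg_ae'
    (uIoc_of_le hab.le ▸ hpos.mono fun _ => le_of_lt) hf]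
  exact ⟨hab, hμ.bot_lt.trans_le hsupport⟩

lemma exists_pos_le_integral_of_le_integral (hf : LocallyIntegrable f) (hh : LocallyIntegrable h)
    (hpos : ∀ᵐ x ∂volume.restrict (Icc a b), 0 < f x) {κ : ℝ} (hκ : 0 < κ) :
    ∃ m > 0, ∀ s t, a ≤ s → s ≤ t → t ≤ b → κ ≤ ∫ x in s..t, h x → m ≤ ∫ x in s..t, f x := by
  let K : Set (ℝ × ℝ) :=
    (Icc a b ×ˢ Icc a b) ∩ ({p | p.1 ≤ p.2} ∩ {p | κ ≤ ∫ x in p.1..p.2, h x})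
  have hK : IsCompact K := (isCompact_Icc.prod isCompact_Icc).inter_right <|
    (isClosed_le continuous_fst continuous_snd).inter
      (isClosed_le continuous_const (continuous_integral_endpoints hh))
  have hint_pos : ∀ p ∈ K, 0 < ∫ x in p.1..p.2, f x := by
    rintro ⟨s, t⟩ ⟨⟨hs, ht⟩, hst : s ≤ t, hκst : κ ≤ ∫ x in s..t, h x⟩
    have hne : s ≠ t := by
      rintro rfl
      exact hκ.not_ge (by simpa using hκst)
    exact integral_pos_of_ae_pos (by simpa using hst.lt_of_ne hne)
      (intervalIntegrable_of_locallyIntegrable hf s t) (ae_restrict_of_ae_restrict_of_subset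
        (Ioc_subset_Icc_self.trans (Icc_subset_Icc hs.1 ht.2)) hpos)
  obtain ⟨m, hm, hmK⟩ :=
    hK.exists_forall_le' (continuous_integral_endpoints hf).continuousOn hint_pos
  exact ⟨m, hm, fun s t has hst htb hκst =>
    hmK (s, t) ⟨⟨⟨has, hst.trans htb⟩, ⟨has.trans hst, htb⟩⟩, hst, hκst⟩⟩

lemma setIntegral_le_of_forall_integral_le {N : Set ℝ} {B : ℝ} (hf : LocallyIntegrable f)
    (hnonneg : 0 ≤ᵐ[volume.restrict (Icc a b)] f) (hN : IsCompact N) (hNab : N ⊆ Icc a b)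
    (hB : 0 ≤ B) (hle : ∀ x ∈ N, ∫ y in a..x, f y ≤ B) : ∫ x in N, f x ≤ B := by
  rcases N.eq_empty_or_nonempty with rfl | hne
  · simpa using hB
  obtain ⟨x, hxN, hx⟩ := hN.exists_isGreatest hne
  have hxab := hNab hxN
  calc ∫ y in N, f y ≤ ∫ y in Icc a x, f y :=
        setIntegral_mono_set (hf.integrableOn_isCompact isCompact_Icc)
          (ae_restrict_of_ae_restrict_of_subset (Icc_subset_Icc_right hxab.2) hnonneg)
          (ae_of_all _ fun y hy => ⟨(hNab hy).1, hx hy⟩)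
    _ = ∫ y in a..x, f y := by
        rw [intervalIntegral.integral_of_le hxab.1, integral_Icc_eq_integral_Ioc]
    _ ≤ B := hle x hxN

variable {N : ℝ → Set ℝ} {B : ℝ}

lemma tendsto_volume_zero_of_mul_integral_le (hf : LocallyIntegrable f)
    (hpos : ∀ᵐ x ∂volume.restrict (Icc a b), 0 < f x) (hNab : ∀ lam, N lam ⊆ Icc a b)
    (hB : ∀ᶠ lam in atTop, ∀ x ∈ N lam, lam * ∫ y in a..x, f y ≤ B) :
    Tendsto (fun lam => volume (N lam)) atTop (nhds 0) := by
  rw [ENNReal.tendsto_nhds_zero]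
  intro ε hε
  obtain ⟨η, -, hη, hηε⟩ := ENNReal.lt_iff_exists_real_btwn.1 hε
  obtain ⟨m, hm, hmass⟩ := exists_pos_le_integral_of_le_integral hf (locallyIntegrable_const 1)
    hpos (ENNReal.ofReal_pos.1 hη)
  filter_upwards [hB, eventually_ge_atTop 0, eventually_gt_atTop (B / m)] with lam hBlam hlam hlarge
  rw [div_lt_iff₀ hm] at hlarge
  have hsub : N lam ⊆ Icc a (a + η) := fun x hx => by
    refine ⟨(hNab lam hx).1, ?_⟩
    by_contra! hxη
    have hmx : m ≤ ∫ y in a..x, f y :=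
      hmass a x le_rfl (hNab lam hx).1 (hNab lam hx).2 (by rw [integral_one]; linarith)
    linarith [hBlam x hx, mul_le_mul_of_nonneg_left hmx hlam]
  calc volume (N lam) ≤ volume (Icc a (a + η)) := measure_mono hsub
    _ = ENNReal.ofReal η := by simp
    _ ≤ ε := hηε.le

lemma exists_mul_setIntegral_le_of_mul_integral_le (hf : LocallyIntegrable f)
    (hnonneg : 0 ≤ᵐ[volume.restrict (Icc a b)] f) (hN : ∀ lam, IsCompact (N lam))
    (hNab : ∀ lam, N lam ⊆ Icc a b)
    (hB : ∀ᶠ lam in atTop, ∀ x ∈ N lam, lam * ∫ y in a..x, f y ≤ B) :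
    ∃ B', ∀ lam, 0 < lam → lam * ∫ x in N lam, f x ≤ B' := by
  obtain ⟨Λ, hΛ⟩ := eventually_atTop.1 hB
  refine ⟨max (max B 0) (Λ * ∫ x in Icc a b, f x), fun lam hlam => ?_⟩
  rcases le_total Λ lam with hle | hle
  · refine le_max_of_le_left ?_
    rw [← le_div_iff₀' hlam]
    refine setIntegral_le_of_forall_integral_le hf hnonneg (hN lam) (hNab lam) (by positivity)
      fun x hx => ?_
    rw [le_div_iff₀' hlam]
    exact (hΛ lam hle x hx).trans (le_max_left B 0)
  · refine le_max_of_le_right (mul_le_mul hle ?_ ?_ (hlam.le.trans hle))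
    · exact setIntegral_mono_set (hf.integrableOn_isCompact isCompact_Icc) hnonneg
        (ae_of_all _ (hNab lam))
    · exact integral_nonneg_of_ae (ae_restrict_of_ae_restrict_of_subset (hNab lam) hnonneg)

end Integral

section Schrodinger

/-- `u` solves the one-dimensional Schrödinger equation `-u″ + q u = 0` with derivative `v`. As `q`
is only locally integrable, the equation for `v = u′` is imposed in integrated form. -/
structure IsSchrodingerSolution (q u v : ℝ → ℝ) : Prop where
  hasDerivAt : ∀ x, HasDerivAt u (v x) x
  eq_add_integral : ∀ x y, v x = v y + ∫ t in y..x, q t * u t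

namespace IsSchrodingerSolution

variable {q u v : ℝ → ℝ}

lemma continuous (hsol : IsSchrodingerSolution q u v) : Continuous u :=
  continuous_iff_continuousAt.2 fun x => (hsol.hasDerivAt x).continuousAt

lemma locallyIntegrable_mul (hsol : IsSchrodingerSolution q u v) (hq : LocallyIntegrable q) :
    LocallyIntegrable fun x => q x * u x :=
  hq.mul_continuous hsol.continuous

lemma absolutelyContinuousOnInterval_deriv (hsol : IsSchrodingerSolution q u v)
    (hq : LocallyIntegrable q) (s t : ℝ) : AbsolutelyContinuousOnInterval v s t := by
  rw [funext fun x => hsol.eq_add_integral x s]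
  have hconst : AbsolutelyContinuousOnInterval (fun _ => v s) s t :=
    (contDiff_const (𝕜 := ℝ) (n := 1)).contDiffOn.absolutelyContinuousOnInterval
  exact hconst.fun_add <| (intervalIntegrable_of_locallyIntegrable
    (hsol.locallyIntegrable_mul hq) s t).absolutelyContinuousOnInterval_intervalIntegral
      left_mem_uIcc

lemma continuous_deriv (hsol : IsSchrodingerSolution q u v) (hq : LocallyIntegrable q) :
    Continuous v := by
  rw [funext fun x => hsol.eq_add_integral x 0]
  exact continuous_const.add <| intervalIntegral.continuous_primitive
    (intervalIntegrable_of_locallyIntegrable (hsol.locallyIntegrable_mul hq)) 0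

lemma ae_hasDerivAt_deriv (hsol : IsSchrodingerSolution q u v) (hq : LocallyIntegrable q) :
    ∀ᵐ x, HasDerivAt v (q x * u x) x := by
  have hprimitive := LocallyIntegrable.ae_hasDerivAt_integral (hsol.locallyIntegrable_mul hq)
  filter_upwards [hprimitive] with x hx
  rw [funext fun x => hsol.eq_add_integral x 0]
  exact (hx 0).const_add (v 0)

lemma contDiff (hsol : IsSchrodingerSolution q u v) (hq : LocallyIntegrable q) :
    ContDiff ℝ 1 u := by
  rw [contDiff_one_iff_deriv, funext fun x => (hsol.hasDerivAt x).deriv]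
  exact ⟨fun x => (hsol.hasDerivAt x).differentiableAt, hsol.continuous_deriv hq⟩

lemma div_sub_div_eq_integral (hsol : IsSchrodingerSolution q u v) (hq : LocallyIntegrable q)
    {s t : ℝ} (hne : ∀ x ∈ uIcc s t, u x ≠ 0) :
    v t / u t - v s / u s = ∫ x in s..t, (q x - (v x / u x) ^ 2) := by
  have hinv : AbsolutelyContinuousOnInterval (fun x => (u x)⁻¹) s t :=
    ((hsol.contDiff hq).contDiffOn.inv hne).absolutelyContinuousOnInterval
  rw [div_eq_mul_inv, div_eq_mul_inv,
    ← (hsol.absolutelyContinuousOnInterval_deriv hq s t).integral_deriv_mul_eq_sub hinv]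
  refine intervalIntegral.integral_congr_ae ?_
  filter_upwards [hsol.ae_hasDerivAt_deriv hq] with x hvx hx
  have hux := hne x (uIoc_subset_uIcc hx)
  rw [hvx.deriv, ((hsol.hasDerivAt x).fun_inv hux).deriv]
  field_simp
  ring

end IsSchrodingerSolution

/-- Polar coordinates `(u, v) = (R sin φ, R cos φ)` of a nowhere vanishing pair with a continuous
angle. -/
structure IsPruferVariables (u v R φ : ℝ → ℝ) : Prop where
  pos : ∀ x, 0 < R x
  continuous : Continuous φ
  eq_mul_sin : ∀ x, u x = R x * Real.sin (φ x)
  eq_mul_cos : ∀ x, v x = R x * Real.cos (φ x)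

lemma IsPruferVariables.div_eq_cot {u v R φ : ℝ → ℝ} (hR : IsPruferVariables u v R φ) (x : ℝ) :
    v x / u x = Real.cot (φ x) := by
  rw [hR.eq_mul_cos, hR.eq_mul_sin, mul_div_mul_left _ _ (hR.pos x).ne', Real.cot_eq_cos_div_sin]

/-- `φ` is the Prüfer angle of some solution of `-u″ + q u = 0`. -/
def IsPruferAngle (q φ : ℝ → ℝ) : Prop :=
  ∃ u v R, IsSchrodingerSolution q u v ∧ IsPruferVariables u v R φ

lemma IsPruferAngle.continuous {q φ : ℝ → ℝ} (hφ : IsPruferAngle q φ) : Continuous φ :=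
  let ⟨_, _, _, _, hR⟩ := hφ
  hR.continuous

lemma IsPruferAngle.cot_sub_cot_eq_integral {q φ : ℝ → ℝ} (hφ : IsPruferAngle q φ)
    (hq : LocallyIntegrable q) {s t : ℝ} (hsin : ∀ x ∈ uIcc s t, Real.sin (φ x) ≠ 0) :
    Real.cot (φ t) - Real.cot (φ s) = ∫ x in s..t, (q x - Real.cot (φ x) ^ 2) := by
  obtain ⟨u, v, R, hsol, hR⟩ := hφ
  simp_rw [← hR.div_eq_cot]
  refine hsol.div_sub_div_eq_integral hq fun x hx => ?_
  rw [hR.eq_mul_sin]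
  exact mul_ne_zero (hR.pos x).ne' (hsin x hx)

variable {f g : ℝ → ℝ} {a b α β : ℝ}

/-- A majorant of `cot² φ - g`, the part of the Riccati equation for `cot φ` that does not involve
the coupling constant, valid while `φ` lies in `[α, β] ⊆ (0, π)`. -/
noncomputable def riccatiMajorant (g : ℝ → ℝ) (α β x : ℝ) : ℝ :=
  |g x| + max |Real.cot α| |Real.cot β| ^ 2

lemma riccatiMajorant_nonneg (g : ℝ → ℝ) (α β x : ℝ) : 0 ≤ riccatiMajorant g α β x := by
  unfold riccatiMajorant
  positivity

lemma locallyIntegrable_riccatiMajorant (hg : LocallyIntegrable g) (α β : ℝ) :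
    LocallyIntegrable (riccatiMajorant g α β) :=
  LocallyIntegrable.add (fun x => (hg x).norm) (locallyIntegrable_const _)

lemma cot_sq_sub_le_riccatiMajorant {x y : ℝ} (hα : 0 < α) (hβ : β < Real.pi)
    (hy : y ∈ Icc α β) : Real.cot y ^ 2 - g x ≤ riccatiMajorant g α β x := by
  have hcot : Real.cot y ^ 2 ≤ max |Real.cot α| |Real.cot β| ^ 2 :=
    sq_le_sq' (neg_le_of_abs_le (abs_cot_le_max hα hβ hy))
      (le_of_abs_le (abs_cot_le_max hα hβ hy))
  unfold riccatiMajorant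
  linarith [neg_le_abs (g x)]

lemma integral_riccatiMajorant_mono (hg : LocallyIntegrable g) {s t : ℝ} (has : a ≤ s)
    (hst : s ≤ t) (htb : t ≤ b) :
    ∫ x in s..t, riccatiMajorant g α β x ≤ ∫ x in a..b, riccatiMajorant g α β x :=
  intervalIntegral.integral_mono_interval has hst htb
    (ae_of_all _ (riccatiMajorant_nonneg g α β))
    (intervalIntegrable_of_locallyIntegrable (locallyIntegrable_riccatiMajorant hg α β) a b)

lemma IsPruferAngle.mul_integral_le {φ : ℝ → ℝ} {lam s t : ℝ}
    (hφ : IsPruferAngle (fun x => g x + lam * f x) φ) (hg : LocallyIntegrable g)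
    (hf : LocallyIntegrable f) (hα : 0 < α) (hβ : β < Real.pi) (hst : s ≤ t)
    (hband : MapsTo φ (Icc s t) (Icc α β)) :
    lam * ∫ x in s..t, f x ≤
      Real.cot (φ t) - Real.cot (φ s) + ∫ x in s..t, riccatiMajorant g α β x := by
  have hq : LocallyIntegrable fun x => g x + lam * f x := hg.add (hf.smul lam)
  have hsin : ∀ x ∈ Icc s t, Real.sin (φ x) ≠ 0 := fun x hx =>
    (Real.sin_pos_of_mem_Ioo (Icc_subset_Ioo hα hβ (hband hx))).ne'
  have hcot : ContinuousOn (fun x => Real.cot (φ x)) (uIcc s t) := by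
    simp_rw [Real.cot_eq_cos_div_sin, uIcc_of_le hst]
    exact (Real.continuous_cos.comp hφ.continuous).continuousOn.div
      (Real.continuous_sin.comp hφ.continuous).continuousOn hsin
  have hf_int := (intervalIntegrable_of_locallyIntegrable hf s t).const_mul lam
  have hmajorant_int := intervalIntegrable_of_locallyIntegrable
    (locallyIntegrable_riccatiMajorant hg α β) s t
  rw [hφ.cot_sub_cot_eq_integral hq (uIcc_of_le hst ▸ hsin), ← sub_le_iff_le_add,
    ← intervalIntegral.integral_const_mul,
    ← intervalIntegral.integral_sub hf_int hmajorant_int]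
  refine intervalIntegral.integral_mono_on hst (hf_int.sub hmajorant_int)
    ((intervalIntegrable_of_locallyIntegrable hq s t).sub (hcot.pow 2).intervalIntegrable)
    fun x hx => ?_
  linarith [cot_sq_sub_le_riccatiMajorant (g := g) (x := x) hα hβ (hband hx)]

variable {φ : ℝ → ℝ → ℝ}

lemma eventually_pruferAngle_lt_of_le (hφ : ∀ lam, IsPruferAngle (fun x => g x + lam * f x) (φ lam))
    (hg : LocallyIntegrable g) (hf : LocallyIntegrable f)
    (hpos : ∀ᵐ x ∂volume.restrict (Icc a b), 0 < f x) (hα : 0 < α) (hαβ : α < β)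
    (hβ : β < Real.pi) :
    ∀ᶠ lam in atTop, ∀ p r, a ≤ p → p ≤ r → r ≤ b → φ lam p ≤ α → φ lam r < β := by
  have hdrop : Real.cot β < Real.cot α :=
    strictAntiOn_cot ⟨hα, hαβ.trans hβ⟩ ⟨hα.trans hαβ, hβ⟩ hαβ
  obtain ⟨m, hm, hmass⟩ := exists_pos_le_integral_of_le_integral hf
    (locallyIntegrable_riccatiMajorant hg α β) hpos (sub_pos.2 hdrop)
  filter_upwards [eventually_ge_atTop 0,
    eventually_ge_atTop ((∫ x in a..b, riccatiMajorant g α β x) / m)]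
    with lam hlam hlarge p r hap hpr hrb hp
  by_contra! hr
  obtain ⟨s, hs, t, ht, hsα, htβ, hband⟩ :=
    exists_Icc_mapsTo_Icc (hφ lam).continuous.continuousOn hpr hαβ.le hp hr
  have hriccati := (hφ lam).mul_integral_le hg hf hα hβ ht.1 hband
  rw [hsα, htβ] at hriccati
  have has : a ≤ s := hap.trans hs.1
  have htb : t ≤ b := ht.2.trans hrb
  have hf_nonneg : 0 ≤ ∫ x in s..t, f x :=
    intervalIntegral.integral_nonneg_of_ae_restrict ht.1 <|
      ae_restrict_of_ae_restrict_of_subset (Icc_subset_Icc has htb) (hpos.mono fun _ => le_of_lt)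
  have hclimb : Real.cot α - Real.cot β ≤ ∫ x in s..t, riccatiMajorant g α β x := by
    linarith [mul_nonneg hlam hf_nonneg]
  have hmst : m ≤ ∫ x in s..t, f x := hmass s t has ht.1 htb hclimb
  rw [div_le_iff₀ hm] at hlarge
  linarith [mul_le_mul_of_nonneg_left hmst hlam,
    integral_riccatiMajorant_mono (α := α) (β := β) hg has ht.1 htb]

lemma exists_eventually_pruferAngle_mapsTo_Icc {θ δ : ℝ}
    (hφ : ∀ lam, IsPruferAngle (fun x => g x + lam * f x) (φ lam)) (hg : LocallyIntegrable g)
    (hf : LocallyIntegrable f) (hpos : ∀ᵐ x ∂volume.restrict (Icc a b), 0 < f x)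
    (hθ : θ < Real.pi) (hδ : 0 < δ) (hφa : ∀ lam, φ lam a ≤ θ) :
    ∃ α β, 0 < α ∧ β < Real.pi ∧
      ∀ᶠ lam in atTop, ∀ x ∈ Icc a b, δ ≤ φ lam x → MapsTo (φ lam) (Icc a x) (Icc α β) := by
  obtain ⟨δ', hδ', hδ'_lt⟩ := exists_between (lt_min hδ Real.pi_pos)
  obtain ⟨hδ'δ, hδ'π⟩ := lt_min_iff.1 hδ'_lt
  obtain ⟨α, hα, hαδ'⟩ := exists_between hδ'
  obtain ⟨β, hγβ, hβ⟩ := exists_between (max_lt hθ (hαδ'.trans hδ'π))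
  refine ⟨α, β, hα, hβ, ?_⟩
  filter_upwards [eventually_pruferAngle_lt_of_le hφ hg hf hpos hα hαδ' hδ'π,
    eventually_pruferAngle_lt_of_le hφ hg hf hpos (hα.trans_le (le_max_right θ α)) hγβ hβ]
    with lam hlow hhigh x hx hδx y hy
  refine ⟨?_, (hhigh a y le_rfl hy.1 (hy.2.trans hx.2) ((hφa lam).trans (le_max_left θ α))).le⟩
  by_contra! hyα
  exact (hlow y x hy.1 hy.2 hx.2 hyα.le).not_ge (hδ'δ.le.trans hδx)

lemma exists_eventually_mul_integral_le_of_le_pruferAngle {θ δ : ℝ}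
    (hφ : ∀ lam, IsPruferAngle (fun x => g x + lam * f x) (φ lam)) (hg : LocallyIntegrable g)
    (hf : LocallyIntegrable f) (hpos : ∀ᵐ x ∂volume.restrict (Icc a b), 0 < f x)
    (hθ : θ < Real.pi) (hδ : 0 < δ) (hφa : ∀ lam, φ lam a ≤ θ) :
    ∃ B, ∀ᶠ lam in atTop, ∀ x ∈ Icc a b, δ ≤ φ lam x → lam * ∫ y in a..x, f y ≤ B := by
  obtain ⟨α, β, hα, hβ, hband⟩ := exists_eventually_pruferAngle_mapsTo_Icc hφ hg hf hpos hθ hδ hφa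
  let M := max |Real.cot α| |Real.cot β|
  refine ⟨2 * M + ∫ y in a..b, riccatiMajorant g α β y, ?_⟩
  filter_upwards [hband] with lam hband x hx hδx
  have hmaps := hband x hx hδx
  have hriccati := (hφ lam).mul_integral_le hg hf hα hβ hx.1 hmaps
  have hcot_x : Real.cot (φ lam x) ≤ M :=
    le_of_abs_le (abs_cot_le_max hα hβ (hmaps (right_mem_Icc.2 hx.1)))
  have hcot_a : -M ≤ Real.cot (φ lam a) :=
    neg_le_of_abs_le (abs_cot_le_max hα hβ (hmaps (left_mem_Icc.2 hx.1)))
  linarith [integral_riccatiMajorant_mono (α := α) (β := β) hg le_rfl hx.1 hx.2]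

end Schrodinger

theorem prufer_phase_exceptional_set_general {g f : ℝ → ℝ} {φ : ℝ → ℝ → ℝ} {a b θ δ : ℝ}
    (hg : LocallyIntegrable g) (hf : LocallyIntegrable f)
    (hpos : ∀ᵐ x ∂volume.restrict (Icc a b), 0 < f x) (hθ : θ < Real.pi) (hδ : 0 < δ)
    (hφ : ∀ lam, IsPruferAngle (fun x => g x + lam * f x) (φ lam)) (hφa : ∀ lam, φ lam a ≤ θ) :
    Tendsto (fun lam => volume {x | x ∈ Icc a b ∧ δ ≤ φ lam x}) atTop (nhds 0) ∧
    ∃ B : ℝ, ∀ lam : ℝ, 0 < lam → lam * ∫ x in {x | x ∈ Icc a b ∧ δ ≤ φ lam x}, f x ≤ B := by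
  obtain ⟨B, hB⟩ := exists_eventually_mul_integral_le_of_le_pruferAngle hφ hg hf hpos hθ hδ hφa
  have hN : ∀ lam, {x | x ∈ Icc a b ∧ δ ≤ φ lam x} ⊆ Icc a b := fun _ _ hx => hx.1
  have hB' : ∀ᶠ lam in atTop, ∀ x ∈ {x | x ∈ Icc a b ∧ δ ≤ φ lam x},
      lam * ∫ y in a..x, f y ≤ B :=
    hB.mono fun lam hlam x hx => hlam x hx.1 hx.2
  have hcompact : ∀ lam, IsCompact {x | x ∈ Icc a b ∧ δ ≤ φ lam x} := fun lam =>
    isCompact_Icc.inter_right (isClosed_le continuous_const (hφ lam).continuous)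
  exact ⟨tendsto_volume_zero_of_mul_integral_le hf hpos hN hB',
    exists_mul_setIntegral_le_of_mul_integral_le hf (hpos.mono fun _ => le_of_lt) hcompact hN hB'⟩

/-- For `N_λ = {x ∈ [a,b] : φ(x,λ) ≥ π/4}`: (i) `|N_λ| → 0` as `λ → ∞`, and
(ii) `sup_{λ>0} λ ∫_{N_λ} f < ∞`. -/
theorem prufer_phase_exceptional_set (g f : ℝ → ℝ)
    (hgm : Measurable g) (hgb : ∃ Cg : ℝ, ∀ x : ℝ, |g x| ≤ Cg)
    (a b : ℝ) (ha : -1 ≤ a) (hab : a < b) (hb : b ≤ 0)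
    (hfm : Measurable f) (C : ℝ)
    (hf : ∀ x : ℝ, 0 ≤ f x ∧ f x ≤ C)
    (hfpos : ∀ᵐ x ∂volume, x ∈ Set.Icc a b → 0 < f x)
    (hfzero : ∀ x : ℝ, x ∉ Set.Icc a b → f x = 0)
    (θ : ℝ) (hθ0 : 0 ≤ θ) (hθπ : θ < Real.pi)
    (u v R φ : ℝ → ℝ → ℝ)
    (hu : ∀ (lam : ℝ) (x : ℝ), HasDerivAt (fun s => u s lam) (v x lam) x)
    (hv : ∀ (lam : ℝ) (x y : ℝ),
      v x lam = v y lam + ∫ t in y..x, (g t + lam * f t) * u t lam)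
    (hu0 : ∀ lam : ℝ, u a lam = Real.sin θ)
    (hv0 : ∀ lam : ℝ, v a lam = Real.cos θ)
    (hR : ∀ x lam : ℝ, 0 < R x lam)
    (hφc : ∀ lam : ℝ, Continuous fun x => φ x lam)
    (huR : ∀ x lam : ℝ, u x lam = R x lam * Real.sin (φ x lam))
    (hvR : ∀ x lam : ℝ, v x lam = R x lam * Real.cos (φ x lam))
    (hφ0 : ∀ lam : ℝ, φ a lam = θ) :
    Tendsto (fun lam : ℝ =>
        volume {x | x ∈ Set.Icc a b ∧ Real.pi / 4 ≤ φ x lam}) atTop (nhds 0) ∧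
    ∃ B : ℝ, ∀ lam : ℝ, 0 < lam →
      lam * ∫ x in {x | x ∈ Set.Icc a b ∧ Real.pi / 4 ≤ φ x lam}, f x ≤ B := by
  obtain ⟨Cg, hCg⟩ := hgb
  exact prufer_phase_exceptional_set_general (φ := fun lam x => φ x lam)
    (locallyIntegrable_of_norm_le hgm.aestronglyMeasurable hCg)
    (locallyIntegrable_of_norm_le hfm.aestronglyMeasurable fun x =>
      (abs_of_nonneg (hf x).1).trans_le (hf x).2)
    ((ae_restrict_iff' measurableSet_Icc).2 hfpos) hθπ (by positivity)
    (fun lam => ⟨_, _, fun x => R x lam, ⟨hu lam, hv lam⟩,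
      ⟨fun x => hR x lam, hφc lam, fun x => huR x lam, fun x => hvR x lam⟩⟩)
    fun lam => (hφ0 lam).le
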